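/- Let λ be a partition of n and k ≥ 1. Then, as formal power series in the single variable q: ((q;q)_n)^k · Σ_{T ∈ SYT(λ)} Σ_{S ∈ (ℕ^k)^n with σ_{des(T)}(S) = ε} q^{|S|} = Σ_{T ∈ SYT(λ)} Σ_{σ⃗ ∈ S_n^{k−1}} q^{comaj_T(σ⃗,ε)}, where |S| = Σ_{j=1}^n Σ_{i=1}^k s^j_i is the sum of all entries of S. (Both sides equal the graded multiplicity ⟨F H_n^{⊗k}, s_λ⟩ of the irreducible S_n-representation indexed by λ in the k-th Kronecker/tensor power of the coinvariant algebra H_n = ℂ[x_1,…,x_n]/(p_1,…,p_n).) -/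

import Mathlib

open scoped Classical

namespace RomeroComaj

noncomputable section

/-- `Seq r` is `ℕ^r`, the type of sequences of natural numbers of length `r`. -/
abbrev Seq (r : ℕ) := Fin r → ℕ

/-- strict lexicographic order on `ℕ^r`. -/
def lexLt {r : ℕ} (a b : Seq r) : Prop :=
  ∃ i : Fin r, (∀ j : Fin r, j < i → a j = b j) ∧ a i < b i

/-- weak lexicographic order on `ℕ^r`. -/
def lexLe {r : ℕ} (a b : Seq r) : Prop :=
  lexLt a b ∨ a = b

/-- `RNbr R a b` : the (1-indexed) indices `a` and `b` are `R`-neighbors,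
i.e. (for `a < b`) all of `a, a+1, …, b-1` lie in `R`. -/
def RNbr (R : Finset ℕ) (a b : ℕ) : Prop :=
  ∀ t ∈ Finset.Ico (min a b) (max a b), t ∈ R

/-- the value `σ_i` of the one-line notation of `σ`, both position `i` and
the value being 1-indexed (junk value `0` outside `1 ≤ i ≤ n`). -/
def pget {n : ℕ} (σ : Equiv.Perm (Fin n)) (i : ℕ) : ℕ :=
  if h : i - 1 < n then (σ ⟨i - 1, h⟩).val + 1 else 0

/-- the sequence `s^i` of a list `S = (s^1, …, s^n)`, `i` being 1-indexed. -/
def sget {n r : ℕ} (S : Fin n → Seq r) (i : ℕ) : Seq r :=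
  if h : i - 1 < n then S ⟨i - 1, h⟩ else 0

/-- the condition for `i` to belong to `Des_{R,S}(σ)`:
`s^{σ_i} > s^{σ_{i+1}} − χ(σ_{i+1} < σ_i ∧ σ_{i+1} ≁_R σ_i) − χ(σ_{i+1} > σ_i ∧ σ_i ∼_R σ_{i+1})`. -/
def desCond {n r : ℕ} (R : Finset ℕ) (S : Fin n → Seq r) (σ : Equiv.Perm (Fin n)) (i : ℕ) :
    Prop :=
  if (pget σ (i+1) < pget σ i ∧ ¬ RNbr R (pget σ (i+1)) (pget σ i)) ∨
      (pget σ i < pget σ (i+1) ∧ RNbr R (pget σ i) (pget σ (i+1)))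
  then lexLe (sget S (pget σ (i+1))) (sget S (pget σ i))
  else lexLt (sget S (pget σ (i+1))) (sget S (pget σ i))

/-- `Des_{R,S}(σ) ⊆ {1, …, n−1}` (1-indexed positions). -/
def DesSet {n r : ℕ} (R : Finset ℕ) (S : Fin n → Seq r) (σ : Equiv.Perm (Fin n)) : Finset ℕ :=
  (Finset.Icc 1 (n-1)).filter (fun i => desCond R S σ i)

/-- `Comaj_{R,S}(σ) = ∑_{i ∈ Des_{R,S}(σ)} (n − i)`. -/
def Comaj {n r : ℕ} (R : Finset ℕ) (S : Fin n → Seq r) (σ : Equiv.Perm (Fin n)) : ℕ :=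
  ∑ i ∈ DesSet R S σ, (n - i)

/-- `s^i` is read before `s^j` in the reading order of `S` (with respect to `R`);
`i, j` are 1-indexed. -/
def readBefore {n r : ℕ} (R : Finset ℕ) (S : Fin n → Seq r) (i j : ℕ) : Prop :=
  lexLt (sget S i) (sget S j) ∨
    (sget S i = sget S j ∧ ((i < j ∧ ¬ RNbr R i j) ∨ (j < i ∧ RNbr R j i)))

/-- `IsReading R S σ` says that the reading permutation `σ_R(S)` equals `σ`,
i.e. `σ` lists `1, …, n` in the reading order of `S`. -/
def IsReading {n r : ℕ} (R : Finset ℕ) (S : Fin n → Seq r) (σ : Equiv.Perm (Fin n)) : Prop :=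
  ∀ i ∈ Finset.Icc 1 (n-1), readBefore R S (pget σ i) (pget σ (i+1))

/-- the operator `Z_{R,σ} : (ℕ^r)^n → (ℕ^{r+1})^n`, prepending to `s^v` the number of
descents of `σ` (w.r.t. `R, S`) at positions strictly before the position of `v` in `σ`. -/
def Zop {n r : ℕ} (R : Finset ℕ) (σ : Equiv.Perm (Fin n)) (S : Fin n → Seq r) :
    Fin n → Seq (r+1) :=
  fun v => Fin.cons ((DesSet R S σ ∩ Finset.Ico 1 ((σ.symm v).val + 1)).card) (S v)

/-- `Zvec R σs i = Z_{R,σ^i} ⋯ Z_{R,σ^1}(∅)` where `σ^{j+1} = σs j`. -/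
def Zvec {n : ℕ} (R : Finset ℕ) (σs : ℕ → Equiv.Perm (Fin n)) : (i : ℕ) → Fin n → Seq i
  | 0 => fun _ => (0 : Seq 0)
  | (i+1) => Zop R (σs i) (Zvec R σs i)

/-- extend a finite vector of permutations to `ℕ`, by the identity. -/
def extFun {n r : ℕ} (σv : Fin r → Equiv.Perm (Fin n)) : ℕ → Equiv.Perm (Fin n) :=
  fun j => if h : j < r then σv ⟨j, h⟩ else 1

/-- `comajI R k σv i = comaj^i_R(σ⃗)` for `1 ≤ i ≤ k`, where `σ⃗ = σv` has length `k−1`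
and `σ^k = ε`. -/
def comajI {n : ℕ} (R : Finset ℕ) (k : ℕ) (σv : Fin (k-1) → Equiv.Perm (Fin n)) (i : ℕ) : ℕ :=
  Comaj R (Zvec R (extFun σv) (i-1)) (extFun σv (i-1))

/-- the exponent of the monomial `q^S` for `S ∈ (ℕ^r)^n` : the (0-indexed) variable `i`
(that is, `q_{i+1}`) records the `(r−i)`-th (0-indexed: `r−1−i`-th) coordinates. -/
def expOf {n r : ℕ} (S : Fin n → Seq r) : Fin r →₀ ℕ :=
  Finsupp.equivFunOnFinite.symm (fun i => ∑ j : Fin n, S j (Fin.rev i))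

/-- the formal power series whose coefficient at a monomial `d` counts the elements
`a : α` satisfying `P a d`. -/
def countSeriesP {σty α : Type*} (P : α → (σty →₀ ℕ) → Prop) : MvPowerSeries σty ℤ :=
  fun d => (Nat.card {a : α // P a d} : ℤ)

/-- `∑_{S ∈ (ℕ^r)^n, P S} q^S`. -/
def countSeries {n r : ℕ} (P : (Fin n → Seq r) → Prop) : MvPowerSeries (Fin r) ℤ :=
  countSeriesP (fun S d => P S ∧ expOf S = d)

/-- the Pochhammer factor `(q_i; q_i)_n = ∏_{j=1}^n (1 − q_i^j)`. -/
def pochOne {r : ℕ} (n : ℕ) (i : Fin r) : MvPowerSeries (Fin r) ℤ :=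
  ∏ j ∈ Finset.Icc 1 n, (1 - (MvPowerSeries.X i : MvPowerSeries (Fin r) ℤ) ^ j)

/-- `∏_{i=1}^{r} (q_i; q_i)_n`. -/
def pochAll (n r : ℕ) : MvPowerSeries (Fin r) ℤ :=
  ∏ i : Fin r, pochOne n i

/-- the exponent of `q_1^{comaj¹_R(σ⃗)} ⋯ q_k^{comaj^k_R(σ⃗)}`. -/
def comajExp {n : ℕ} (R : Finset ℕ) (k : ℕ) (σv : Fin (k-1) → Equiv.Perm (Fin n)) :
    Fin k →₀ ℕ :=
  Finsupp.equivFunOnFinite.symm (fun i => comajI R k σv (i.val + 1))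

/-- A standard Young tableau of shape `μ` (with `μ.card` cells), recorded by the
position `pos i` of each (1-indexed) entry `i ∈ {1, …, μ.card}`; entries increase
left-to-right along rows and down columns (matrix convention), and `pos` is a
bijection from `{1, …, μ.card}` onto the cells of `μ` (normalized by `0` outside). -/
structure SYT (μ : YoungDiagram) where
  pos : ℕ → ℕ × ℕ
  mem : ∀ i ∈ Finset.Icc 1 μ.card, pos i ∈ μ
  inj : ∀ i ∈ Finset.Icc 1 μ.card, ∀ j ∈ Finset.Icc 1 μ.card, pos i = pos j → i = j
  surj : ∀ c ∈ μ, ∃ i ∈ Finset.Icc 1 μ.card, pos i = c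
  row_inc : ∀ i ∈ Finset.Icc 1 μ.card, ∀ j ∈ Finset.Icc 1 μ.card,
    (pos i).1 = (pos j).1 → (pos i).2 < (pos j).2 → i < j
  col_inc : ∀ i ∈ Finset.Icc 1 μ.card, ∀ j ∈ Finset.Icc 1 μ.card,
    (pos i).2 = (pos j).2 → (pos i).1 < (pos j).1 → i < j
  junk : ∀ i, i ∉ Finset.Icc 1 μ.card → pos i = 0

/-- `des(T)` : the set of `i ∈ {1, …, n−1}` such that `i+1` lies in a strictly
higher row of `T` than `i` (in matrix convention: a strictly larger row index). -/
def desSYT {μ : YoungDiagram} (T : SYT μ) : Finset ℕ :=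
  (Finset.Icc 1 (μ.card - 1)).filter (fun i => (T.pos i).1 < (T.pos (i+1)).1)

/-- the ordinary descent set `des(π) = {i : π_i > π_{i+1}}` (1-indexed). -/
def desPerm {n : ℕ} (π : Equiv.Perm (Fin n)) : Finset ℕ :=
  (Finset.Icc 1 (n-1)).filter (fun i => pget π (i+1) < pget π i)

/-- `comaj(π) = ∑_{i ∈ des(π)} (n − i)`. -/
def comajP {n : ℕ} (π : Equiv.Perm (Fin n)) : ℕ :=
  ∑ i ∈ desPerm π, (n - i)


/-! ### Generating functions -/

def gf {α : Type*} (w : α → ℕ) : PowerSeries ℤ :=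
  PowerSeries.mk (fun d => (Nat.card {a : α // w a = d} : ℤ))

theorem gf_equiv {α β : Type*} (e : α ≃ β) (w : α → ℕ) (w' : β → ℕ)
    (h : ∀ a, w' (e a) = w a) : gf w = gf w' := by
  unfold gf
  congr 1
  funext d
  rw [Nat.card_congr (e.subtypeEquiv (p := fun a => w a = d) (q := fun b => w' b = d)
    (fun a => by rw [h a]))]

theorem gf_prod {α β : Type*} (w : α → ℕ) (w' : β → ℕ)
    (hf : ∀ d, Finite {a // w a = d}) (hf' : ∀ d, Finite {a // w' a = d}) :
    gf (fun x : α × β => w x.1 + w' x.2) = gf w * gf w' := by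
  ext d
  rw [PowerSeries.coeff_mul]
  simp only [gf, PowerSeries.coeff_mk]
  let e : {x : α × β // w x.1 + w' x.2 = d} ≃
      Σ p : {p : ℕ × ℕ // p ∈ Finset.HasAntidiagonal.antidiagonal d}, {a // w a = p.1.1} × {b // w' b = p.1.2} :=
    { toFun := fun x => ⟨⟨(w x.1.1, w' x.1.2), by simpa using x.2⟩, ⟨x.1.1, rfl⟩, ⟨x.1.2, rfl⟩⟩
      invFun := fun y => ⟨(y.2.1.1, y.2.2.1), by
        have := y.1.2
        rw [Finset.HasAntidiagonal.mem_antidiagonal] at this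
        rw [y.2.1.2, y.2.2.2, this]⟩
      left_inv := fun x => rfl
      right_inv := by
        rintro ⟨⟨⟨p, q⟩, h⟩, ⟨a, ha⟩, ⟨b, hb⟩⟩
        dsimp only at ha hb
        subst ha hb
        rfl }
  rw [Nat.card_congr e, Nat.card_sigma]
  simp only [Nat.card_prod]
  rw [← Finset.sum_coe_sort (Finset.HasAntidiagonal.antidiagonal d)]
  push_cast
  rfl

theorem gf_sigma {ι : Type*} [Fintype ι] {α : ι → Type*} (w : (i : ι) → α i → ℕ)
    (hf : ∀ i d, Finite {a // w i a = d}) :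
    gf (fun x : Σ i, α i => w x.1 x.2) = ∑ i, gf (w i) := by
  ext d
  rw [map_sum]
  simp only [gf, PowerSeries.coeff_mk]
  let e : {x : Σ i, α i // w x.1 x.2 = d} ≃ Σ i, {a : α i // w i a = d} :=
    { toFun := fun x => ⟨x.1.1, ⟨x.1.2, x.2⟩⟩
      invFun := fun y => ⟨⟨y.1, y.2.1⟩, y.2.2⟩
      left_inv := fun x => rfl
      right_inv := fun y => rfl }
  rw [Nat.card_congr e, Nat.card_sigma]
  push_cast
  rfl

theorem gf_unique {α : Type*} [Unique α] (w : α → ℕ) : gf w = PowerSeries.X ^ (w default) := by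
  ext d
  rw [PowerSeries.coeff_X_pow]
  simp only [gf, PowerSeries.coeff_mk]
  split_ifs with h
  · have : Unique {a // w a = d} := ⟨⟨⟨default, h.symm⟩⟩, fun a => Subtype.ext (Subsingleton.elim _ _)⟩
    simp
  · have : IsEmpty {a // w a = d} := ⟨fun a => h (by
      rw [← a.2]; congr 1; exact Subsingleton.elim _ _)⟩
    simp

theorem gf_empty {α : Type*} [IsEmpty α] (w : α → ℕ) : gf w = 0 := by
  ext d
  simp [gf]

theorem gf_shift {α : Type*} (w : α → ℕ) (c : ℕ) (hf : ∀ d, Finite {a // w a = d}) :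
    gf (fun a => w a + c) = PowerSeries.X ^ c * gf w := by
  have h1 := gf_prod w (fun _ : Unit => c) hf (fun d => inferInstance)
  rw [gf_unique (fun _ : Unit => c)] at h1
  rw [mul_comm, ← h1]
  exact gf_equiv (Equiv.prodPUnit α).symm _ _ (fun a => rfl)

theorem gf_fintype {α : Type*} [Fintype α] (w : α → ℕ) :
    gf w = ∑ a, (PowerSeries.X : PowerSeries ℤ) ^ (w a) := by
  have h := gf_sigma (ι := α) (α := fun _ => Unit) (fun a _ => w a) (fun _ _ => inferInstance)
  rw [gf_equiv (Equiv.sigmaPUnit α).symm w (fun x => w x.1) (fun a => rfl)]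
  rw [h]
  refine Finset.sum_congr rfl (fun a _ => ?_)
  rw [gf_unique]

theorem gf_mul (m : ℕ) (hm : 0 < m) :
    (1 - (PowerSeries.X : PowerSeries ℤ) ^ m) * gf (fun b : ℕ => m * b) = 1 := by
  have hf : ∀ d, Finite {a : ℕ // m * a = d} := fun d => by
    refine Finite.of_injective (β := Unit) (fun _ => ()) ?_
    rintro ⟨a, ha⟩ ⟨b, hb⟩ _
    apply Subtype.ext
    exact Nat.eq_of_mul_eq_mul_left hm (ha.trans hb.symm)
  rw [sub_mul, one_mul, ← gf_shift _ _ hf]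
  have h := gf_sigma (ι := Bool) (α := fun b => if b then ℕ else Unit)
    (fun b => match b with | true => fun a : ℕ => m * a + m | false => fun _ => 0)
    (fun b d => by
      cases b
      · exact inferInstanceAs (Finite {a : Unit // 0 = d})
      · refine Finite.of_injective (β := {a : ℕ // m * a = d - m})
          (fun x : {a : ℕ // m * a + m = d} => ⟨x.1, by have := x.2; omega⟩) ?_
        intro x y hxy
        exact Subtype.ext (by simpa using hxy))
  rw [Fintype.sum_bool] at h
  rw [sub_eq_iff_eq_add, add_comm]
  have e0 : gf (fun _ : Unit => 0) = 1 := by rw [gf_unique, pow_zero]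
  rw [← e0]
  refine Eq.trans ?_ h
  refine gf_equiv
    { toFun := fun a => match a with | 0 => ⟨false, ()⟩ | a + 1 => ⟨true, a⟩
      invFun := fun x => match x with | ⟨false, _⟩ => 0 | ⟨true, a⟩ => Nat.succ a
      left_inv := fun a => by cases a <;> rfl
      right_inv := fun x => by rcases x with ⟨_ | _, x⟩ <;> rfl } _ _ ?_
  intro a
  cases a
  · rfl
  · rfl

theorem finite_of_bdd {n : ℕ} (d : ℕ) : Finite {a : Fin n → ℕ // ∑ i, a i = d} := by
  refine Finite.of_injective (β := Fin n → Fin (d + 1))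
    (fun x i => ⟨x.1 i, by
      have h := Finset.single_le_sum (f := x.1) (fun _ _ => Nat.zero_le _) (Finset.mem_univ i)
      have := x.2
      omega⟩) ?_
  intro x y hxy
  apply Subtype.ext
  funext i
  have := congrFun hxy i
  simpa using this

theorem finite_of_bdd2 {n k : ℕ} (d : ℕ) :
    Finite {S : Fin n → Seq k // ∑ j, ∑ i, S j i = d} := by
  refine Finite.of_injective (β := Fin n → Fin k → Fin (d + 1))
    (fun x j i => ⟨x.1 j i, by
      have h := Finset.single_le_sum (f := x.1 j) (fun _ _ => Nat.zero_le _) (Finset.mem_univ i)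
      have h' := Finset.single_le_sum (f := fun j => ∑ i, x.1 j i)
        (fun _ _ => Nat.zero_le _) (Finset.mem_univ j)
      have := x.2
      omega⟩) ?_
  intro x y hxy
  apply Subtype.ext
  funext j i
  have := congrFun (congrFun hxy j) i
  simpa using this

theorem finite_sub {α : Type*} (p : α → Prop) (w : α → ℕ) (d : ℕ) [h : Finite {a // w a = d}] :
    Finite {x : {a // p a} // w x.1 = d} := by
  refine Finite.of_injective (β := {a // w a = d}) (fun x => ⟨x.1.1, x.2⟩) ?_
  intro x y hxy
  apply Subtype.ext
  apply Subtype.ext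
  simpa using hxy

/-! ### Chains -/

def chain {n : ℕ} (d : ℕ → ℕ) (a : Fin n → ℕ) : Prop :=
  ∀ i, ∀ h : i < n, (if hi : 0 < i then a ⟨i - 1, by omega⟩ else 0) + d i ≤ a ⟨i, h⟩

theorem chain_succ {n : ℕ} (d : ℕ → ℕ) (a : Fin n → ℕ) (b : ℕ) :
    chain d (Fin.cons (b + d 0) (fun i => a i + (b + d 0)) : Fin (n + 1) → ℕ) ↔
      chain (fun i => d (i + 1)) a := by
  unfold chain
  constructor
  · intro H i h
    have := H (i + 1) (by omega)
    rcases i with _ | i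
    · have e : (⟨0 + 1, by omega⟩ : Fin (n + 1)) = Fin.succ ⟨0, h⟩ := rfl
      rw [e] at this
      simp only [Fin.cons_succ] at this
      have e : (⟨0 + 1 - 1, by omega⟩ : Fin (n + 1)) = 0 := rfl
      simp at this ⊢
      omega
    · have e : (⟨i + 1 + 1, by omega⟩ : Fin (n + 1)) = Fin.succ ⟨i + 1, h⟩ := rfl
      rw [e] at this
      have e : (⟨i + 1 + 1 - 1, by omega⟩ : Fin (n + 1)) = Fin.succ ⟨i, by omega⟩ := rfl
      simp only [e, Fin.cons_succ] at this
      simp at this ⊢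
      omega
  · intro H i h
    rcases i with _ | _ | i
    · have e : (⟨0, h⟩ : Fin (n + 1)) = 0 := rfl
      rw [e]
      simp
    · have := H 0 (by omega)
      have e : (⟨0 + 1, by omega⟩ : Fin (n + 1)) = Fin.succ ⟨0, by omega⟩ := rfl
      rw [e]
      have e : (⟨0 + 1 - 1, by omega⟩ : Fin (n + 1)) = 0 := rfl
      simp only [Fin.cons_succ]
      simp at this ⊢
      omega
    · have := H (i + 1) (by omega)
      have e : (⟨i + 1 + 1, by omega⟩ : Fin (n + 1)) = Fin.succ ⟨i + 1, by omega⟩ := rfl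
      rw [e]
      have e : (⟨i + 1 + 1 - 1, by omega⟩ : Fin (n + 1)) = Fin.succ ⟨i, by omega⟩ := rfl
      simp only [e, Fin.cons_succ]
      simp at this ⊢
      omega

theorem chain_ge {n : ℕ} (d : ℕ → ℕ) (a : Fin (n + 1) → ℕ) (h : chain d a) :
    d 0 ≤ a 0 ∧ ∀ i, a 0 ≤ a i := by
  constructor
  · have := h 0 (by omega)
    simpa using this
  · rintro ⟨i, hi⟩
    induction i with
    | zero => exact le_refl _
    | succ i ih =>
      have h1 := ih (by omega)
      have := h (i + 1) hi
      simp at this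
      omega

def chainEquiv {n : ℕ} (d : ℕ → ℕ) :
    ℕ × {a : Fin n → ℕ // chain (fun i => d (i + 1)) a} ≃ {a : Fin (n + 1) → ℕ // chain d a} where
  toFun x := ⟨Fin.cons (x.1 + d 0) (fun i => x.2.1 i + (x.1 + d 0)),
    (chain_succ d x.2.1 x.1).2 x.2.2⟩
  invFun a := (a.1 0 - d 0, ⟨fun i => a.1 i.succ - a.1 0, by
    obtain ⟨h0, h1⟩ := chain_ge d a.1 a.2
    rw [← chain_succ d _ (a.1 0 - d 0)]
    convert a.2
    rw [Nat.sub_add_cancel h0]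
    funext i
    refine Fin.cases ?_ (fun i => ?_) i
    · simp
    · simp [Nat.sub_add_cancel (h1 _)]⟩)
  left_inv x := by
    ext <;> simp
  right_inv a := by
    obtain ⟨h0, h1⟩ := chain_ge d a.1 a.2
    apply Subtype.ext
    dsimp only
    rw [Nat.sub_add_cancel h0]
    funext i
    refine Fin.cases ?_ (fun i => ?_) i
    · simp
    · simp [Nat.sub_add_cancel (h1 _)]

theorem gf_chain (n : ℕ) : ∀ (d : ℕ → ℕ),
    (∏ j ∈ Finset.Icc 1 n, (1 - (PowerSeries.X : PowerSeries ℤ) ^ j)) *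
      gf (fun a : {a : Fin n → ℕ // chain d a} => ∑ i, a.1 i) =
    PowerSeries.X ^ (∑ i ∈ Finset.range n, (n - i) * d i) := by
  induction n with
  | zero =>
    intro d
    have : Unique {a : Fin 0 → ℕ // chain d a} :=
      ⟨⟨⟨fun _ => 0, fun i h => absurd h (by omega)⟩⟩, fun a => Subtype.ext (Subsingleton.elim _ _)⟩
    rw [gf_unique]
    simp
  | succ n ih =>
    intro d
    rw [Finset.prod_Icc_succ_top (by omega)]
    have hfm : ∀ e, Finite {a : ℕ // (n + 1) * a = e} := fun e => by
      refine Finite.of_injective (β := Unit) (fun _ => ()) ?_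
      rintro ⟨a, ha⟩ ⟨b, hb⟩ _
      apply Subtype.ext
      exact Nat.eq_of_mul_eq_mul_left (Nat.succ_pos n) (ha.trans hb.symm)
    have h2 : ∀ d e, Finite {x : {a : Fin n → ℕ // chain d a} // ∑ i, x.1 i = e} := fun d e => by
      have := finite_of_bdd (n := n) e
      exact finite_sub _ (fun a : Fin n → ℕ => ∑ i, a i) e
    have h1 : gf (fun a : {a : Fin (n + 1) → ℕ // chain d a} => ∑ i, a.1 i) =
        PowerSeries.X ^ ((n + 1) * d 0) * (gf (fun b : ℕ => (n + 1) * b)) *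
        gf (fun a : {a : Fin n → ℕ // chain (fun i => d (i + 1)) a} => ∑ i, a.1 i) := by
      rw [← gf_shift _ _ hfm, ← gf_prod _ _ ?_ (h2 _)]
      · symm
        refine gf_equiv (chainEquiv d) _ _ ?_
        rintro ⟨b, a⟩
        simp only [chainEquiv, Equiv.coe_fn_mk, Fin.sum_univ_succ, Fin.cons_zero, Fin.cons_succ,
          Finset.sum_add_distrib, Finset.sum_const, Finset.card_univ, Fintype.card_fin,
          smul_eq_mul]
        ring
      · intro e
        have := hfm (e - (n + 1) * d 0)
        refine Finite.of_injective (β := {a : ℕ // (n + 1) * a = e - (n + 1) * d 0})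
          (fun x => ⟨x.1, by have := x.2; omega⟩) ?_
        intro x y hxy
        exact Subtype.ext (by simpa using hxy)
    rw [h1, Finset.sum_range_succ', pow_add _ (∑ i ∈ Finset.range n, (n + 1 - (i + 1)) * d (i + 1))]
    have h3 := ih (fun i => d (i + 1))
    have h4 := gf_mul (n + 1) (Nat.succ_pos n)
    simp only [Nat.add_sub_add_right, Nat.sub_zero]
    rw [← h3]
    linear_combination (∏ j ∈ Finset.Icc 1 n, (1 - (PowerSeries.X : PowerSeries ℤ) ^ j)) *
      gf (fun a : {a : Fin n → ℕ // chain (fun i => d (i + 1)) a} => ∑ i, a.1 i) *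
      PowerSeries.X ^ ((n + 1) * d 0) * h4

/-! ### The reading order -/

def blk (R : Finset ℕ) (i : ℕ) : ℕ := ((Finset.range i).filter (fun t => t ∉ R)).card

theorem blk_mono (R : Finset ℕ) {i j : ℕ} (h : i ≤ j) : blk R i ≤ blk R j :=
  Finset.card_le_card (Finset.filter_subset_filter _ (Finset.range_mono h))

theorem blk_eq_iff (R : Finset ℕ) {i j : ℕ} (h : i ≤ j) : blk R i = blk R j ↔ RNbr R i j := by
  unfold RNbr
  rw [min_eq_left h, max_eq_right h]
  have hsub : (Finset.range i).filter (fun t => t ∉ R) ⊆ (Finset.range j).filter (fun t => t ∉ R) :=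
    Finset.filter_subset_filter _ (Finset.range_mono h)
  constructor
  · intro he t ht
    have := Finset.eq_of_subset_of_card_le hsub (le_of_eq he.symm)
    by_contra hR
    rw [Finset.mem_Ico] at ht
    have hm : t ∈ (Finset.range j).filter (fun t => t ∉ R) := by simp [ht.2, hR]
    rw [← this] at hm
    simp at hm
    omega
  · intro H
    unfold blk
    congr 1
    apply Finset.Subset.antisymm hsub
    intro t ht
    simp only [Finset.mem_filter, Finset.mem_range] at ht ⊢
    refine ⟨?_, ht.2⟩
    by_contra hi
    exact ht.2 (H t (Finset.mem_Ico.2 ⟨by omega, ht.1⟩))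

abbrev Key (k : ℕ) := Lex (Lex (Fin k → ℕ) × Lex (ℕ × ℕᵒᵈ))

def key {n k : ℕ} (R : Finset ℕ) (S : Fin n → Seq k) (u : Fin n) : Key k :=
  toLex (toLex (S u), toLex (blk R (u.val + 1), OrderDual.toDual (u.val + 1)))

theorem lexLt_iff {k : ℕ} (a b : Seq k) : lexLt a b ↔ toLex a < toLex b := Iff.rfl

theorem sget_succ {n k : ℕ} (S : Fin n → Seq k) (u : Fin n) : sget S (u.val + 1) = S u := by
  simp [sget]

theorem pget_succ {n : ℕ} (σ : Equiv.Perm (Fin n)) (i : ℕ) (h : i < n) :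
    pget σ (i + 1) = (σ ⟨i, h⟩).val + 1 := by
  simp [pget, h]

theorem key_lt_iff {n k : ℕ} (R : Finset ℕ) (S : Fin n → Seq k) (u v : Fin n) :
    key R S u < key R S v ↔ lexLt (S u) (S v) ∨ (S u = S v ∧
      (blk R (u.val + 1) < blk R (v.val + 1) ∨
        (blk R (u.val + 1) = blk R (v.val + 1) ∧ v.val < u.val))) := by
  unfold key
  rw [Prod.Lex.toLex_lt_toLex, Prod.Lex.toLex_lt_toLex, lexLt_iff]
  simp [OrderDual.toDual_lt_toDual]

theorem key_inj {n k : ℕ} (R : Finset ℕ) (S : Fin n → Seq k) : Function.Injective (key R S) := by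
  intro u v h
  have : (ofLex (ofLex (key R S u)).2).2 = (ofLex (ofLex (key R S v)).2).2 := by rw [h]
  have h2 : u.val + 1 = v.val + 1 := this
  exact Fin.ext (by omega)

theorem readBefore_iff {n k : ℕ} (R : Finset ℕ) (S : Fin n → Seq k) (u v : Fin n) :
    readBefore R S (u.val + 1) (v.val + 1) ↔ key R S u < key R S v := by
  rw [key_lt_iff]
  unfold readBefore
  rw [sget_succ, sget_succ]
  refine or_congr_right (and_congr_right fun _ => ?_)
  rcases lt_trichotomy u.val v.val with h | h | h
  · have h1 := blk_mono R (show u.val + 1 ≤ v.val + 1 by omega)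
    rw [← blk_eq_iff R (show u.val + 1 ≤ v.val + 1 by omega)]
    omega
  · rw [h]; simp
  · have h1 := blk_mono R (show v.val + 1 ≤ u.val + 1 by omega)
    rw [← blk_eq_iff R (show v.val + 1 ≤ u.val + 1 by omega)]
    omega

theorem desCond_iff {n k : ℕ} (R : Finset ℕ) (S : Fin n → Seq k) (σ : Equiv.Perm (Fin n)) (i : ℕ)
    (h : i + 1 < n) :
    desCond R S σ (i + 1) ↔ key R S (σ ⟨i + 1, h⟩) < key R S (σ ⟨i, by omega⟩) := by
  rw [key_lt_iff]
  unfold desCond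
  rw [pget_succ σ (i + 1) h, pget_succ σ i (by omega), sget_succ, sget_succ]
  have hne : (σ ⟨i + 1, h⟩).val ≠ (σ ⟨i, by omega⟩).val := by
    intro he
    have := σ.injective (Fin.ext he)
    simp at this
  generalize σ ⟨i + 1, h⟩ = u at *
  generalize σ ⟨i, _⟩ = v at *
  unfold lexLe
  rcases lt_or_gt_of_ne hne with h | h
  · have h1 := blk_mono R (show u.val + 1 ≤ v.val + 1 by omega)
    rw [← blk_eq_iff R (show u.val + 1 ≤ v.val + 1 by omega)]
    have h3 : ¬ (v.val + 1 < u.val + 1) := by omega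
    split_ifs with hc
    · refine or_congr_right ?_
      have : blk R (u.val + 1) < blk R (v.val + 1) := by
        rcases hc with hc | hc <;> omega
      simp [this]
    · have h5 : blk R (u.val + 1) = blk R (v.val + 1) := by
        by_contra h6
        exact hc (Or.inl ⟨by omega, h6⟩)
      have : ¬ v.val < u.val := by omega
      simp [h5, this]
  · have h1 := blk_mono R (show v.val + 1 ≤ u.val + 1 by omega)
    rw [← blk_eq_iff R (show v.val + 1 ≤ u.val + 1 by omega)]
    split_ifs with hc
    · refine or_congr_right ?_
      have : blk R (v.val + 1) = blk R (u.val + 1) := by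
        rcases hc with hc | hc <;> omega
      simp [this]
      intro; omega
    · have h5 : ¬ blk R (v.val + 1) = blk R (u.val + 1) := by
        intro h6
        exact hc (Or.inr ⟨by omega, h6⟩)
      constructor
      · exact Or.inl
      · rintro (h7 | h7)
        · exact h7
        · omega

theorem isReading_iff {n k : ℕ} (R : Finset ℕ) (S : Fin n → Seq k) (σ : Equiv.Perm (Fin n)) :
    IsReading R S σ ↔
      ∀ i, ∀ h : i + 1 < n, key R S (σ ⟨i, by omega⟩) < key R S (σ ⟨i + 1, h⟩) := by
  unfold IsReading
  constructor
  · intro H i h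
    have := H (i + 1) (Finset.mem_Icc.2 (by omega))
    rw [pget_succ σ (i + 1) h, pget_succ σ i (by omega)] at this
    exact (readBefore_iff _ _ _ _).1 this
  · intro H i hi
    rw [Finset.mem_Icc] at hi
    obtain ⟨j, rfl⟩ : ∃ j, i = j + 1 := ⟨i - 1, by omega⟩
    rw [pget_succ σ (j + 1) (by omega), pget_succ σ j (by omega)]
    exact (readBefore_iff _ _ _ _).2 (H j (by omega))

theorem isReading_strictMono {n k : ℕ} (R : Finset ℕ) (S : Fin n → Seq k)
    (σ : Equiv.Perm (Fin n)) : IsReading R S σ ↔ StrictMono (key R S ∘ σ) := by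
  rw [isReading_iff]
  constructor
  · intro H
    rcases n with _ | n
    · intro a; exact a.elim0
    · rw [Fin.strictMono_iff_lt_succ]
      intro i
      exact H i.val (by omega)
  · intro H i h
    exact H (by simp)

theorem key_lt_of_reading {n k : ℕ} {R : Finset ℕ} {S : Fin n → Seq k} {τ : Equiv.Perm (Fin n)}
    (h : IsReading R S τ) (u v : Fin n) : key R S u < key R S v ↔ τ.symm u < τ.symm v := by
  rw [isReading_strictMono] at h
  rw [← h.lt_iff_lt]
  simp

theorem exists_reading {n k : ℕ} (R : Finset ℕ) (S : Fin n → Seq k) : ∃ τ, IsReading R S τ := by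
  refine ⟨Tuple.sort (key R S), ?_⟩
  rw [isReading_strictMono]
  exact (Tuple.monotone_sort _).strictMono_of_injective ((key_inj R S).comp (Equiv.injective _))

theorem reading_unique {n k : ℕ} {R : Finset ℕ} {S : Fin n → Seq k} {τ τ' : Equiv.Perm (Fin n)}
    (h : IsReading R S τ) (h' : IsReading R S τ') : τ = τ' := by
  rw [isReading_strictMono] at h h'
  have := (StrictMono.range_inj h h').1 (by
    rw [EquivLike.range_comp, EquivLike.range_comp])
  ext i
  rw [key_inj R S (congrFun this i)]

def dd {n : ℕ} (τ σ : Equiv.Perm (Fin n)) (i : ℕ) : ℕ :=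
  if ∃ h : 0 < i ∧ i < n, τ.symm (σ ⟨i, h.2⟩) < τ.symm (σ ⟨i - 1, by omega⟩) then 1 else 0

def cc {n : ℕ} (τ σ : Equiv.Perm (Fin n)) : ℕ := ∑ i ∈ Finset.range n, (n - i) * dd τ σ i

theorem mem_DesSet_iff {n k : ℕ} {R : Finset ℕ} {S : Fin n → Seq k} {τ : Equiv.Perm (Fin n)}
    (h : IsReading R S τ) (σ : Equiv.Perm (Fin n)) (i : ℕ) :
    i ∈ DesSet R S σ ↔
      ∃ h : 0 < i ∧ i < n, τ.symm (σ ⟨i, h.2⟩) < τ.symm (σ ⟨i - 1, by omega⟩) := by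
  unfold DesSet
  rw [Finset.mem_filter, Finset.mem_Icc]
  constructor
  · rintro ⟨h1, h2⟩
    refine ⟨by omega, ?_⟩
    obtain ⟨j, rfl⟩ : ∃ j, i = j + 1 := ⟨i - 1, by omega⟩
    rw [desCond_iff _ _ _ _ (by omega), key_lt_of_reading h] at h2
    exact h2
  · rintro ⟨h1, h2⟩
    refine ⟨by omega, ?_⟩
    obtain ⟨j, rfl⟩ : ∃ j, i = j + 1 := ⟨i - 1, by omega⟩
    rw [desCond_iff _ _ _ _ (by omega), key_lt_of_reading h]
    exact h2

theorem Comaj_eq {n k : ℕ} {R : Finset ℕ} {S : Fin n → Seq k} {τ : Equiv.Perm (Fin n)}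
    (h : IsReading R S τ) (σ : Equiv.Perm (Fin n)) : Comaj R S σ = cc τ σ := by
  unfold Comaj cc
  have hd : ∀ i, dd τ σ i = if i ∈ DesSet R S σ then 1 else 0 := by
    intro i
    unfold dd
    simp only [mem_DesSet_iff h]
  simp only [hd, mul_ite, mul_one, mul_zero]
  rw [← Finset.sum_filter]
  refine Finset.sum_congr ?_ (fun _ _ => rfl)
  ext i
  rw [Finset.mem_filter, Finset.mem_range]
  constructor
  · intro hi
    refine ⟨?_, hi⟩
    obtain ⟨h1, _⟩ := (mem_DesSet_iff h σ i).1 hi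
    exact h1.2
  · exact fun hi => hi.2

theorem lexLt_cons {k : ℕ} (x y : ℕ) (s t : Seq k) :
    lexLt (Fin.cons x s : Seq (k + 1)) (Fin.cons y t : Seq (k + 1)) ↔ x < y ∨ (x = y ∧ lexLt s t) := by
  unfold lexLt
  constructor
  · rintro ⟨i, hi, hlt⟩
    revert hi hlt
    refine Fin.cases ?_ (fun i => ?_) i
    · intro _ h
      left; simpa using h
    · intro hj h
      right
      refine ⟨by simpa using hj 0 (Fin.succ_pos i), i, fun j hji => ?_, by simpa using h⟩
      simpa using hj j.succ (Fin.succ_lt_succ_iff.2 hji)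
  · rintro (h | ⟨rfl, i, hi, h⟩)
    · exact ⟨0, fun j hj => absurd hj (by simp), by simpa using h⟩
    · refine ⟨i.succ, fun j => ?_, by simpa using h⟩
      refine Fin.cases ?_ (fun j => ?_) j
      · simp
      · intro hj
        simpa using hi j (Fin.succ_lt_succ_iff.1 hj)

theorem key_cons {n k : ℕ} (R : Finset ℕ) (a : Fin n → ℕ) (S : Fin n → Seq k) (u v : Fin n) :
    key R (fun j => (Fin.cons (a j) (S j) : Seq (k + 1))) u <
      key R (fun j => (Fin.cons (a j) (S j) : Seq (k + 1))) v ↔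
    a u < a v ∨ (a u = a v ∧ key R S u < key R S v) := by
  rw [key_lt_iff, key_lt_iff, lexLt_cons, Fin.cons_inj]
  tauto

theorem isReading_cons {n k : ℕ} {R : Finset ℕ} (a : Fin n → ℕ) {S : Fin n → Seq k}
    {τ : Equiv.Perm (Fin n)} (h : IsReading R S τ) (σ : Equiv.Perm (Fin n)) :
    IsReading R (fun j => (Fin.cons (a j) (S j) : Seq (k + 1))) σ ↔ chain (dd τ σ) (a ∘ σ) := by
  rw [isReading_iff]
  simp only [key_cons, key_lt_of_reading h]
  have hne : ∀ i (hi : i + 1 < n), τ.symm (σ ⟨i, by omega⟩) ≠ τ.symm (σ ⟨i + 1, hi⟩) := by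
    intro i hi he
    have := σ.injective (τ.symm.injective he)
    simp at this
  unfold chain
  constructor
  · intro H i hi
    rcases i with _ | i
    · simp [dd]
    · have h1 := H i hi
      have h2 := hne i hi
      simp only [Nat.succ_pos, dif_pos, Function.comp, Nat.add_sub_cancel]
      unfold dd
      split_ifs with hc
      · obtain ⟨_, hc⟩ := hc
        simp only [Nat.add_sub_cancel] at hc
        rcases h1 with h1 | h1
        · omega
        · exact absurd h1.2 (not_lt_of_gt hc)
      · omega
  · intro H i hi
    have h1 := H (i + 1) hi
    have h2 := hne i hi
    simp only [Nat.succ_pos, dif_pos, Function.comp, Nat.add_sub_cancel] at h1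
    unfold dd at h1
    split_ifs at h1 with hc
    · left; omega
    · rcases lt_or_gt_of_ne h2 with h3 | h3
      · rcases Nat.lt_or_ge (a (σ ⟨i, by omega⟩)) (a (σ ⟨i + 1, hi⟩)) with h4 | h4
        · exact Or.inl h4
        · exact Or.inr ⟨by omega, h3⟩
      · exact absurd ⟨⟨by omega, hi⟩, h3⟩ hc

theorem isReading_Zop {n k : ℕ} (R : Finset ℕ) (S : Fin n → Seq k) (σ : Equiv.Perm (Fin n)) :
    IsReading R (Zop R σ S) σ := by
  obtain ⟨τ, h⟩ := exists_reading R S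
  unfold Zop
  rw [isReading_cons _ h]
  intro i hi
  rcases i with _ | i
  · simp [dd]
  · simp only [Nat.succ_pos, dif_pos, Function.comp, Nat.add_sub_cancel, Equiv.symm_apply_apply]
    unfold dd
    simp only [← mem_DesSet_iff h σ (i + 1)]
    have hsub : DesSet R S σ ∩ Finset.Ico 1 (i + 1) ⊆ DesSet R S σ ∩ Finset.Ico 1 (i + 1 + 1) :=
      Finset.inter_subset_inter_left (Finset.Ico_subset_Ico_right (by omega))
    split_ifs with hc
    · refine Nat.succ_le_of_lt (Finset.card_lt_card ⟨hsub, fun hh => ?_⟩)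
      have : i + 1 ∈ DesSet R S σ ∩ Finset.Ico 1 (i + 1) :=
        hh (Finset.mem_inter.2 ⟨hc, Finset.mem_Ico.2 (by omega)⟩)
      simp at this
    · exact Finset.card_le_card hsub

/-! ### The recursion -/

def wt {n k : ℕ} (S : Fin n → Seq k) : ℕ := ∑ j, ∑ i, S j i

def F {n : ℕ} (R : Finset ℕ) (k : ℕ) (σ : Equiv.Perm (Fin n)) : PowerSeries ℤ :=
  gf (fun S : {S : Fin n → Seq k // IsReading R S σ} => wt S.1)

def stepEquiv {n : ℕ} (R : Finset ℕ) (k : ℕ) (σ : Equiv.Perm (Fin n)) :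
    {S : Fin n → Seq (k + 1) // IsReading R S σ} ≃
      Σ τ : Equiv.Perm (Fin n), {S : Fin n → Seq k // IsReading R S τ} ×
        {a : Fin n → ℕ // chain (dd τ σ) a} where
  toFun S := ⟨Classical.choose (exists_reading R (fun j => Fin.tail (S.1 j))),
    ⟨fun j => Fin.tail (S.1 j), Classical.choose_spec (exists_reading R _)⟩,
    ⟨fun j => S.1 (σ j) 0, by
      have h := Classical.choose_spec (exists_reading R (fun j => Fin.tail (S.1 j)))
      have := (isReading_cons (fun j => S.1 j 0) h σ).1 (by
        simp only [Fin.cons_self_tail]; exact S.2)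
      exact this⟩⟩
  invFun x := ⟨fun j => (Fin.cons (x.2.2.1 (σ.symm j)) (x.2.1.1 j) : Seq (k + 1)), by
    rw [isReading_cons (fun j => x.2.2.1 (σ.symm j)) x.2.1.2]
    convert x.2.2.2
    funext j
    simp⟩
  left_inv S := by
    apply Subtype.ext
    funext j
    simp
  right_inv := by
    rintro ⟨τ, ⟨S, hS⟩, ⟨a, ha⟩⟩
    have h := Classical.choose_spec (exists_reading R S)
    have e := reading_unique hS h
    subst e
    simp [Fin.tail_cons]
    exact HEq.rfl

theorem F_succ {n : ℕ} (R : Finset ℕ) (k : ℕ) (σ : Equiv.Perm (Fin n)) :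
    (∏ j ∈ Finset.Icc 1 n, (1 - (PowerSeries.X : PowerSeries ℤ) ^ j)) * F R (k + 1) σ =
      ∑ τ, F R k τ * PowerSeries.X ^ (cc τ σ) := by
  have h2 : ∀ d e, Finite {x : {a : Fin n → ℕ // chain d a} // ∑ i, x.1 i = e} := fun d e => by
    have := finite_of_bdd (n := n) e
    exact finite_sub _ (fun a : Fin n → ℕ => ∑ i, a i) e
  have h1 : ∀ τ d, Finite {x : {S : Fin n → Seq k // IsReading R S τ} // wt x.1 = d} := fun τ d => by
    have : Finite {S : Fin n → Seq k // wt S = d} := finite_of_bdd2 d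
    exact finite_sub _ wt d
  have hw : F R (k + 1) σ = gf (fun x : Σ τ : Equiv.Perm (Fin n),
      {S : Fin n → Seq k // IsReading R S τ} × {a : Fin n → ℕ // chain (dd τ σ) a} =>
      wt x.2.1.1 + ∑ i, x.2.2.1 i) := by
    refine gf_equiv (stepEquiv R k σ) _ _ ?_
    intro S
    simp only [stepEquiv, Equiv.coe_fn_mk, wt, Fin.sum_univ_succ, Finset.sum_add_distrib, Fin.tail]
    rw [Equiv.sum_comp σ (fun j => S.1 j 0), add_comm]
  rw [hw, gf_sigma (fun (τ : Equiv.Perm (Fin n)) (x : {S : Fin n → Seq k // IsReading R S τ} ×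
    {a : Fin n → ℕ // chain (dd τ σ) a}) => wt x.1.1 + ∑ i, x.2.1 i), Finset.mul_sum]
  · refine Finset.sum_congr rfl fun τ _ => ?_
    rw [gf_prod (fun S : {S : Fin n → Seq k // IsReading R S τ} => wt S.1)
      (fun a : {a : Fin n → ℕ // chain (dd τ σ) a} => ∑ i, a.1 i) (h1 τ) (h2 _)]
    unfold cc
    rw [← gf_chain n (dd τ σ)]
    unfold F
    ring
  · intro τ d
    have : Finite {S : Fin n → Seq (k + 1) // wt S = d} := finite_of_bdd2 d
    have h3 : Finite {x : {S : Fin n → Seq (k + 1) // IsReading R S σ} // wt x.1 = d} :=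
      finite_sub _ wt d
    refine Finite.of_injective (β := {x : {S : Fin n → Seq (k + 1) // IsReading R S σ} // wt x.1 = d})
      (fun x => ⟨(stepEquiv R k σ).symm ⟨τ, x.1⟩, ?_⟩) ?_
    · have := x.2
      simp only [stepEquiv, Equiv.coe_fn_symm_mk, wt, Fin.sum_univ_succ, Finset.sum_add_distrib,
        Fin.cons_zero, Fin.cons_succ] at this ⊢
      rw [Equiv.sum_comp σ.symm (fun j => x.1.2.1 j), add_comm]
      exact this
    · intro x y hxy
      have := (stepEquiv R k σ).symm.injective (Subtype.ext_iff.1 hxy)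
      apply Subtype.ext
      simpa using this

theorem F_zero {n : ℕ} (R : Finset ℕ) (σ : Equiv.Perm (Fin n)) :
    F R 0 σ = if IsReading R (fun _ : Fin n => (0 : Seq 0)) σ then 1 else 0 := by
  unfold F
  have e : ∀ S : Fin n → Seq 0, S = fun _ => 0 := fun S => Subsingleton.elim _ _
  split_ifs with h
  · have : Unique {S : Fin n → Seq 0 // IsReading R S σ} :=
      ⟨⟨⟨_, h⟩⟩, fun a => Subtype.ext (Subsingleton.elim _ _)⟩
    rw [gf_unique]
    simp [wt]
  · have : IsEmpty {S : Fin n → Seq 0 // IsReading R S σ} := ⟨fun S => h (by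
      rw [← e S.1]; exact S.2)⟩
    rw [gf_empty]

def extF {n r : ℕ} (v : Fin r → Equiv.Perm (Fin n)) (σ : Equiv.Perm (Fin n)) :
    ℕ → Equiv.Perm (Fin n) :=
  fun j => if h : j < r then v ⟨j, h⟩ else σ

def CW {n : ℕ} (R : Finset ℕ) (k : ℕ) (s : ℕ → Equiv.Perm (Fin n)) : ℕ :=
  ∑ i ∈ Finset.range k, Comaj R (Zvec R s i) (s i)

theorem Zvec_congr {n : ℕ} (R : Finset ℕ) (s t : ℕ → Equiv.Perm (Fin n)) (i : ℕ)
    (h : ∀ j < i, s j = t j) : Zvec R s i = Zvec R t i := by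
  induction i with
  | zero => rfl
  | succ i ih =>
    show Zop R (s i) (Zvec R s i) = Zop R (t i) (Zvec R t i)
    rw [ih (fun j hj => h j (by omega)), h i (by omega)]

theorem CW_congr {n : ℕ} (R : Finset ℕ) (s t : ℕ → Equiv.Perm (Fin n)) (k : ℕ)
    (h : ∀ j < k, s j = t j) : CW R k s = CW R k t := by
  refine Finset.sum_congr rfl fun i hi => ?_
  rw [Finset.mem_range] at hi
  rw [Zvec_congr R s t i (fun j hj => h j (by omega)), h i hi]

theorem F_main {n : ℕ} (R : Finset ℕ) (k : ℕ) : ∀ σ : Equiv.Perm (Fin n),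
    (∏ j ∈ Finset.Icc 1 n, (1 - (PowerSeries.X : PowerSeries ℤ) ^ j)) ^ (k + 1) * F R (k + 1) σ =
      ∑ v : Fin k → Equiv.Perm (Fin n), PowerSeries.X ^ (CW R (k + 1) (extF v σ)) := by
  induction k with
  | zero =>
    intro σ
    rw [zero_add, pow_one, F_succ]
    obtain ⟨τ, h⟩ := exists_reading R (fun _ : Fin n => (0 : Seq 0))
    rw [Finset.sum_eq_single τ]
    · rw [F_zero, if_pos h, one_mul, ← Comaj_eq h]
      simp [CW, extF, Zvec]
    · intro τ' _ hne
      rw [F_zero, if_neg (fun h' => hne (reading_unique h' h)), zero_mul]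
    · simp
  | succ k ih =>
    intro σ
    rw [pow_succ, mul_assoc, F_succ, Finset.mul_sum]
    rw [← (Fin.snocEquiv (fun _ : Fin (k + 1) => Equiv.Perm (Fin n))).sum_comp,
      Fintype.sum_prod_type]
    refine Finset.sum_congr rfl fun τ _ => ?_
    rw [← mul_assoc, ih τ, Finset.sum_mul]
    refine Finset.sum_congr rfl fun v _ => ?_
    rw [← pow_add]
    congr 1
    set s := extF (Fin.snocEquiv (fun _ : Fin (k + 1) => Equiv.Perm (Fin n)) (τ, v)) σ with hs
    have h1 : ∀ j < k + 1, s j = extF v τ j := by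
      intro j hj
      simp only [hs, extF, Fin.snocEquiv, Equiv.coe_fn_mk, hj, dif_pos, Fin.snoc]
      split_ifs <;> rfl
    have h2 : s (k + 1) = σ := by simp [hs, extF]
    have h3 : s k = τ := by rw [h1 k (by omega)]; simp [extF]
    have h4 : CW R (k + 1 + 1) s = CW R (k + 1) s + Comaj R (Zvec R s (k + 1)) (s (k + 1)) :=
      Finset.sum_range_succ _ _
    rw [h4, CW_congr R s _ (k + 1) h1, h2]
    congr 1
    symm
    apply Comaj_eq
    have := isReading_Zop R (Zvec R s k) (s k)
    rw [h3] at this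
    show IsReading R (Zop R (s k) (Zvec R s k)) τ
    rw [h3]
    exact this

theorem SYT_finite (μ : YoungDiagram) : Finite (SYT μ) := by
  refine Finite.of_injective (β := {i // i ∈ Finset.Icc 1 μ.card} → {c // c ∈ μ.cells})
    (fun T i => ⟨T.pos i.1, T.mem i.1 i.2⟩) ?_
  intro T T' h
  have : T.pos = T'.pos := by
    funext i
    by_cases hi : i ∈ Finset.Icc 1 μ.card
    · have := congrFun h ⟨i, hi⟩
      simpa using this
    · rw [T.junk i hi, T'.junk i hi]
  cases T
  cases T'
  simp only at this
  subst this
  rfl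

/-- **Theorem (graded multiplicities in Kronecker powers of the harmonics).**
For `λ ⊢ n` and `k ≥ 1`, in `ℤ[[q]]`:
`((q;q)_n)^k ⬝ ∑_{T ∈ SYT(λ)} ∑_{S, σ_{des T}(S) = ε} q^{|S|}
  = ∑_{T ∈ SYT(λ)} ∑_{σ⃗ ∈ S_n^{k−1}} q^{comaj_T(σ⃗, ε)}`. -/
theorem kronecker_harmonics (n k : ℕ) (hn : 1 ≤ n) (hk : 1 ≤ k)
    (μ : YoungDiagram) (hμ : μ.card = n) :
    (∏ j ∈ Finset.Icc 1 n, (1 - (PowerSeries.X : PowerSeries ℤ) ^ j)) ^ k *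
      PowerSeries.mk (fun d =>
        (Nat.card {TS : SYT μ × (Fin n → Seq k) //
          IsReading (desSYT TS.1) TS.2 1 ∧ (∑ j : Fin n, ∑ i : Fin k, TS.2 j i) = d} : ℤ)) =
    PowerSeries.mk (fun d =>
      (Nat.card {Tv : SYT μ × (Fin (k-1) → Equiv.Perm (Fin n)) //
        (∑ i ∈ Finset.Icc 1 k, comajI (desSYT Tv.1) k Tv.2 i) = d} : ℤ)) := by
  have := SYT_finite μ
  have := Fintype.ofFinite (SYT μ)
  obtain ⟨k, rfl⟩ : ∃ k', k = k' + 1 := ⟨k - 1, by omega⟩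
  have hL : PowerSeries.mk (fun d =>
        (Nat.card {TS : SYT μ × (Fin n → Seq (k + 1)) //
          IsReading (desSYT TS.1) TS.2 1 ∧ (∑ j : Fin n, ∑ i : Fin (k + 1), TS.2 j i) = d} : ℤ)) =
      ∑ T : SYT μ, F (n := n) (desSYT T) (k + 1) 1 := by
    unfold F
    rw [← gf_sigma (fun (T : SYT μ)
      (S : {S : Fin n → Seq (k + 1) // IsReading (desSYT T) S 1}) => wt S.1)]
    · unfold gf
      congr 1
      funext d
      refine congrArg _ (Nat.card_congr ?_)
      exact
        { toFun := fun x => ⟨⟨x.1.1, ⟨x.1.2, x.2.1⟩⟩, x.2.2⟩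
          invFun := fun y => ⟨(y.1.1, y.1.2.1), ⟨y.1.2.2, y.2⟩⟩
          left_inv := fun x => rfl
          right_inv := fun y => rfl }
    · intro T d
      have : Finite {S : Fin n → Seq (k + 1) // wt S = d} := finite_of_bdd2 d
      exact finite_sub _ wt d
  rw [hL, Finset.mul_sum]
  refine Eq.trans ?_ (gf_fintype (fun Tv : SYT μ × (Fin (k + 1 - 1) → Equiv.Perm (Fin n)) =>
    ∑ i ∈ Finset.Icc 1 (k + 1), comajI (desSYT Tv.1) (k + 1) Tv.2 i)).symm
  rw [Fintype.sum_prod_type]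
  refine Finset.sum_congr rfl fun T _ => ?_
  rw [F_main]
  refine Finset.sum_congr rfl fun v _ => ?_
  congr 1
  unfold CW
  have hI : Finset.Icc 1 (k + 1) = (Finset.range (k + 1)).image (fun i => i + 1) := by
    ext i
    simp only [Finset.mem_Icc, Finset.mem_image, Finset.mem_range]
    constructor
    · intro h
      exact ⟨i - 1, by omega, by omega⟩
    · rintro ⟨j, h1, rfl⟩
      omega
  rw [hI, Finset.sum_image (fun a _ b _ h => by simpa using h)]
  rfl

end

end RomeroComaj
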